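/- arXiv:1112.3800 — 2 statements merged into one kernel-verified Lean document; each statement's English description precedes it below -/
import Mathlib

section
/- Let n, k be natural numbers and let 𝔪 be a maximal ideal of the ring R^k(ℝⁿ). Then there exists a unique point x ∈ ℝⁿ such that 𝔪 = {f ∈ R^k(ℝⁿ) : f(x) = 0}. -/
open MvPolynomial

/-- A function `f : ℝⁿ → ℝ` is `k`-regulous if it is of class `C^k` on all of `ℝⁿ` and
agrees with a rational function: there are polynomials `p`, `q` with `q ≠ 0` and
`q(x) * f(x) = p(x)` for every `x`. -/
def IsRegulous (n k : ℕ) (f : (Fin n → ℝ) → ℝ) : Prop :=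
  ContDiff ℝ k f ∧ ∃ p q : MvPolynomial (Fin n) ℝ, q ≠ 0 ∧
    ∀ x : Fin n → ℝ, eval x q * f x = eval x p

/-- The ring `R^k(ℝⁿ)` of `k`-regulous functions, as a subring of the ring of all
functions `ℝⁿ → ℝ` with pointwise operations. -/
def regulousRing (n k : ℕ) : Subring ((Fin n → ℝ) → ℝ) where
  carrier := {f | IsRegulous n k f}
  one_mem' := ⟨contDiff_const, 1, 1, one_ne_zero, by simp⟩
  zero_mem' := ⟨contDiff_const, 0, 1, one_ne_zero, by simp⟩
  mul_mem' := by
    rintro f g ⟨hf, p₁, q₁, hq₁, h₁⟩ ⟨hg, p₂, q₂, hq₂, h₂⟩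
    refine ⟨hf.mul hg, p₁ * p₂, q₁ * q₂, mul_ne_zero hq₁ hq₂, fun x => ?_⟩
    simp only [eval_mul, Pi.mul_apply]
    linear_combination (eval x q₂ * g x) * h₁ x + eval x p₁ * h₂ x
  add_mem' := by
    rintro f g ⟨hf, p₁, q₁, hq₁, h₁⟩ ⟨hg, p₂, q₂, hq₂, h₂⟩
    refine ⟨hf.add hg, p₁ * q₂ + p₂ * q₁, q₁ * q₂, mul_ne_zero hq₁ hq₂, fun x => ?_⟩
    simp only [eval_mul, eval_add, Pi.add_apply]
    linear_combination (eval x q₂) * h₁ x + (eval x q₁) * h₂ x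
  neg_mem' := by
    rintro f ⟨hf, p, q, hq, h⟩
    refine ⟨hf.neg, -p, q, hq, fun x => ?_⟩
    simp only [map_neg, Pi.neg_apply]
    linear_combination -(h x)

/- Let `m` be maximal, `p` its intersection with the polynomial ring and `V` the real zero set of
the prime ideal `p`. Any `g` in the ring that vanishes on `V` lies in `m`: otherwise `r g + u = 1`
with `u ∈ m`, and `s² + u²` is an invertible element of `m`, where `s ∈ p` is a sum of squares with
zero set `V`.

Off the zeros of some polynomial `δ ∉ p`, every point of `V` is central: its neighbourhoods in `V`
are Zariski dense. One adjoins the coordinates one at a time; a new coordinate is either free or a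
simple root of its minimal equation, and then the implicit function theorem extends it continuously
to a neighbourhood. As `δ ∉ m`, it does not vanish on `V`, so that `V` has a central point `a`.

Let `f ∈ m`, with `q f = p₀`. Although `q` may vanish on `V`, expanding this equation along lines
`x + t v` and comparing lowest order terms in `t` gives `Q f = P` on `V` with `Q ∉ p`. Then
`P ∈ m`, so `Q f = 0` on `V`, and `f a = 0` by continuity because `a` is central. Hence `m` is
contained in, and so equal to, the ideal of functions vanishing at `a`. -/

open Topology Filter
open scoped Polynomial

section MinimalEquation

variable {R : Type*} [CommRing R]

/-- `G` is an equation of least degree for the class of `X` in `R[X] ⧸ P` over the image of `R`.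
It plays the role of the minimal polynomial of that class, without passing to fraction fields. -/
structure IsMinimalEquation (P : Ideal R[X]) (G : R[X]) : Prop where
  mem : G ∈ P
  notMem_map_C : G ∉ (P.comap Polynomial.C).map Polynomial.C
  natDegree_le : ∀ r ∈ P, r ∉ (P.comap Polynomial.C).map Polynomial.C → G.natDegree ≤ r.natDegree

lemma exists_isMinimalEquation {P : Ideal R[X]}
    (hP : ¬ P ≤ (P.comap Polynomial.C).map Polynomial.C) : ∃ G, IsMinimalEquation P G := by
  obtain ⟨r, hr⟩ := SetLike.not_le_iff_exists.1 hP
  obtain ⟨G, hG, hmin⟩ := exists_minimalFor_of_wellFoundedLT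
    (fun r => r ∈ P ∧ r ∉ (P.comap Polynomial.C).map Polynomial.C) Polynomial.natDegree ⟨r, hr⟩
  exact ⟨G, hG.1, hG.2, fun r hr hr' => (le_total _ _).elim id (hmin ⟨hr, hr'⟩)⟩

namespace IsMinimalEquation

variable {P : Ideal R[X]} {G : R[X]}

lemma natDegree_pos (hG : IsMinimalEquation P G) : 0 < G.natDegree := by
  by_contra! h
  have hGC := Polynomial.eq_C_of_natDegree_le_zero h
  have hc : G.coeff 0 ∈ P.comap Polynomial.C := by
    rw [Ideal.mem_comap, ← hGC]
    exact hG.mem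
  exact hG.notMem_map_C (hGC ▸ Ideal.mem_map_of_mem _ hc)

lemma coeff_mem (hG : IsMinimalEquation P G) {r : R[X]} (hr : r ∈ P)
    (hdeg : r.natDegree < G.natDegree) (i : ℕ) : r.coeff i ∈ P.comap Polynomial.C := by
  by_contra h
  exact hdeg.not_ge (hG.natDegree_le r hr fun hr' => h (Ideal.mem_map_C_iff.1 hr' i))

lemma leadingCoeff_notMem (hG : IsMinimalEquation P G) :
    G.leadingCoeff ∉ P.comap Polynomial.C := by
  intro hlc
  have hmono : Polynomial.monomial G.natDegree G.leadingCoeff ∈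
      (P.comap Polynomial.C).map Polynomial.C := by
    rw [← Polynomial.C_mul_X_pow_eq_monomial]
    exact Ideal.mul_mem_right _ _ (Ideal.mem_map_of_mem _ hlc)
  have herase := G.eraseLead_add_monomial_natDegree_leadingCoeff
  have hmem : G.eraseLead ∈ P := by
    rw [← add_sub_cancel_right G.eraseLead, herase]
    exact P.sub_mem hG.mem (Ideal.map_comap_le hmono)
  have hdeg : G.eraseLead.natDegree < G.natDegree := by
    have := G.eraseLead_natDegree_le
    have := hG.natDegree_pos
    omega
  refine hG.notMem_map_C (herase ▸ Ideal.add_mem _ ?_ hmono)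
  exact Ideal.mem_map_C_iff.2 (hG.coeff_mem hmem hdeg)

lemma derivative_notMem [Algebra ℚ R] (hG : IsMinimalEquation P G) :
    Polynomial.derivative G ∉ P := by
  intro hmem
  have hpos := hG.natDegree_pos
  have hcoeff := hG.coeff_mem hmem (Polynomial.natDegree_derivative_lt hpos.ne') (G.natDegree - 1)
  have hunit : IsUnit (G.natDegree : R) := by
    simpa using (IsUnit.mk0 (G.natDegree : ℚ) (by positivity)).map (algebraMap ℚ R)
  rw [Polynomial.coeff_derivative, ← Nat.cast_add_one, Nat.sub_add_cancel hpos] at hcoeff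
  exact hG.leadingCoeff_notMem ((Ideal.mul_unit_mem_iff_mem _ hunit).1 hcoeff)

lemma eval₂_eq_zero {L : Type*} [CommRing L] [IsDomain L] (hG : IsMinimalEquation P G)
    {e : R →+* L} (he : P.comap Polynomial.C ≤ RingHom.ker e) (hlc : e G.leadingCoeff ≠ 0)
    {y : L} (hy : G.eval₂ e y = 0) {r : R[X]} (hr : r ∈ P) : r.eval₂ e y = 0 := by
  induction hd : r.natDegree using Nat.strong_induction_on generalizing r with
  | _ d ih =>
  subst hd
  by_cases hrC : r ∈ (P.comap Polynomial.C).map Polynomial.C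
  · have hmap : r.map e = 0 := by
      ext i
      simpa using he (Ideal.mem_map_C_iff.1 hrC i)
    rw [Polynomial.eval₂_eq_eval_map, hmap, Polynomial.eval_zero]
  · have hle := hG.natDegree_le r hr hrC
    have hcancel : (G.cancelLeads r).eval₂ e y = 0 :=
      ih _ (Polynomial.natDegree_cancelLeads_lt_of_natDegree_le_natDegree hle
        (hG.natDegree_pos.trans_le hle))
        (P.sub_mem (P.mul_mem_left _ hr) (P.mul_mem_left _ hG.mem)) rfl
    simpa [Polynomial.cancelLeads, hy, Nat.sub_eq_zero_of_le hle, hlc] using hcancel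

lemma exists_mul_sub_C_mem [P.IsPrime] (hG : IsMinimalEquation P G) {Q : R[X]} (hQ : Q ∉ P) :
    ∃ c ∉ P.comap Polynomial.C, ∃ S, Q * S - Polynomial.C c ∈ P := by
  let p := P.under R
  have hmk : ∀ r : R[X], Polynomial.aeval (Ideal.Quotient.mk P Polynomial.X)
      (r.map (Ideal.Quotient.mk p)) = Ideal.Quotient.mk P r := by
    intro r
    rw [Polynomial.aeval_def, Polynomial.eval₂_map]
    exact (Polynomial.hom_eval₂ r Polynomial.C (Ideal.Quotient.mk P) Polynomial.X).symm.trans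
      (by rw [Polynomial.eval₂_C_X])
  have hX : IsAlgebraic (R ⧸ p) (Ideal.Quotient.mk P Polynomial.X) := by
    refine ⟨G.map (Ideal.Quotient.mk p), fun h => hG.leadingCoeff_notMem ?_, ?_⟩
    · have hlead : Ideal.Quotient.mk p G.leadingCoeff = 0 := by
        simpa using congrArg (Polynomial.coeff · G.natDegree) h
      exact Ideal.Quotient.eq_zero_iff_mem.1 hlead
    · rw [hmk, Ideal.Quotient.eq_zero_iff_mem]
      exact hG.mem
  have hQalg : IsAlgebraic (R ⧸ p) (Ideal.Quotient.mk P Q) :=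
    Algebra.isAlgebraic_adjoin_singleton_iff.2 hX _
      (hmk Q ▸ Polynomial.aeval_mem_adjoin_singleton _ _)
  have hQ0 : Ideal.Quotient.mk P Q ≠ 0 := mt Ideal.Quotient.eq_zero_iff_mem.1 hQ
  obtain ⟨c, hc, s, hs⟩ := hQalg.exists_nonzero_dvd (mem_nonZeroDivisors_of_ne_zero hQ0)
  obtain ⟨c, rfl⟩ := Ideal.Quotient.mk_surjective c
  obtain ⟨S, rfl⟩ := Ideal.Quotient.mk_surjective s
  refine ⟨c, mt Ideal.Quotient.eq_zero_iff_mem.2 hc, S, Ideal.Quotient.eq.1 ?_⟩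
  rw [map_mul, ← hs]
  rfl

end IsMinimalEquation

end MinimalEquation

section ImplicitFunction

variable {𝕜 : Type*} [RCLike 𝕜] {n : ℕ}

lemma exists_continuousAt_implicit {E : Type*} [NormedAddCommGroup E]
    [NormedSpace 𝕜 E] [CompleteSpace E] {f : E × 𝕜 → 𝕜} {b : E} {y d : 𝕜}
    (hf : ContDiffAt 𝕜 1 f (b, y)) (hd : HasDerivAt (fun z => f (b, z)) d y) (hd0 : d ≠ 0) :
    ∃ ψ : E → 𝕜, ContinuousAt ψ b ∧ ψ b = y ∧ ∀ᶠ c in 𝓝 b, f (c, ψ c) = f (b, y) := by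
  have hpartial : fderiv 𝕜 f (b, y) ∘L .inr 𝕜 E 𝕜 =
      ContinuousLinearEquiv.unitsEquivAut 𝕜 (Units.mk0 d hd0) := by
    ext
    have hchain := ((hf.differentiableAt one_ne_zero).hasFDerivAt.comp_hasDerivAt y
      ((hasDerivAt_const y b).prodMk (hasDerivAt_id y))).unique hd
    simpa using hchain
  have hinv : (fderiv 𝕜 f (b, y) ∘L .inr 𝕜 E 𝕜).IsInvertible := ⟨_, hpartial.symm⟩
  exact ⟨hf.implicitFunction one_ne_zero hinv,
    (hf.contDiffAt_implicitFunction one_ne_zero hinv).continuousAt,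
    hf.implicitFunction_apply_self one_ne_zero hinv,
    hf.eventually_apply_implicitFunction one_ne_zero hinv⟩

lemma eval_cons_eq_eval₂ {R : Type*} [CommSemiring R] (y : R) (b : Fin n → R)
    (s : MvPolynomial (Fin (n + 1)) R) :
    eval (Fin.cons y b : Fin (n + 1) → R) s = (finSuccEquiv R n s).eval₂ (eval b) y := by
  rw [eval_eq_eval_mv_eval', Polynomial.eval_map]

lemma contDiff_eval {σ : Type*} [Fintype σ] (p : MvPolynomial σ 𝕜) {k : WithTop ℕ∞} :
    ContDiff 𝕜 k fun x => eval x p :=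
  (AnalyticOnNhd.eval_mvPolynomial p).contDiff

lemma exists_continuousAt_root {G : (MvPolynomial (Fin n) 𝕜)[X]} {b : Fin n → 𝕜} {y : 𝕜}
    (hy : G.eval₂ (eval b) y = 0) (hy' : G.derivative.eval₂ (eval b) y ≠ 0) :
    ∃ ψ : (Fin n → 𝕜) → 𝕜, ContinuousAt ψ b ∧ ψ b = y ∧
      ∀ᶠ c in 𝓝 b, G.eval₂ (eval c) (ψ c) = 0 := by
  have hsmooth : ContDiff 𝕜 1 fun u : (Fin n → 𝕜) × 𝕜 => G.eval₂ (eval u.1) u.2 := by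
    have hcons : ContDiff 𝕜 1 fun u : (Fin n → 𝕜) × 𝕜 => (Fin.cons u.2 u.1 : Fin (n + 1) → 𝕜) := by
      refine contDiff_pi.2 (Fin.cases ?_ fun i => ?_)
      · exact contDiff_snd
      · exact (contDiff_apply 𝕜 𝕜 i).comp contDiff_fst
    simpa [Function.comp_def, eval_cons_eq_eval₂] using
      (contDiff_eval ((finSuccEquiv 𝕜 n).symm G)).comp hcons
  have hderiv : HasDerivAt (fun z => G.eval₂ (eval b) z) (G.derivative.eval₂ (eval b) y) y := by
    simpa [Polynomial.eval_map, Polynomial.derivative_map] using (G.map (eval b)).hasDerivAt y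
  simpa only [hy] using exists_continuousAt_implicit hsmooth.contDiffAt hderiv hy'

end ImplicitFunction

section CentralPoint

variable {𝕜 : Type*} [RCLike 𝕜] {n : ℕ}

lemma mem_zeroLocus_iff_le_ker {σ K : Type*} [Field K] {I : Ideal (MvPolynomial σ K)} {x : σ → K} :
    x ∈ zeroLocus K I ↔ I ≤ RingHom.ker (eval x) :=
  Iff.rfl

/-- Central points of the real zero set `V` of the prime ideal `p`: those all of whose
neighbourhoods in `V` are Zariski dense, in the sense that only members of `p` vanish on them. -/
def IsCentralPoint {σ K : Type*} [Field K] [TopologicalSpace K]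
    (p : Ideal (MvPolynomial σ K)) (a : σ → K) : Prop :=
  ∀ Q ∉ p, a ∈ closure (zeroLocus K p ∩ {b | eval b Q ≠ 0})

lemma IsCentralPoint.eq_zero_of_eval_mul_eq_zero {σ K : Type*} [Field K] [TopologicalSpace K]
    [T1Space K] {p : Ideal (MvPolynomial σ K)} {a : σ → K} (ha : IsCentralPoint p a)
    {f : (σ → K) → K} (hf : Continuous f) {Q : MvPolynomial σ K} (hQ : Q ∉ p)
    (h : ∀ x ∈ zeroLocus K p, eval x Q * f x = 0) : f a = 0 :=
  closure_minimal (fun x hx => (mul_eq_zero.1 (h x hx.1)).resolve_left hx.2)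
    (isClosed_singleton.preimage hf) (ha Q hQ)

lemma cons_mem_zeroLocus_iff {P : Ideal (MvPolynomial (Fin n) 𝕜)[X]} {y : 𝕜} {b : Fin n → 𝕜} :
    (Fin.cons y b : Fin (n + 1) → 𝕜) ∈ zeroLocus 𝕜 (P.comap (finSuccEquiv 𝕜 n)) ↔
      ∀ r ∈ P, r.eval₂ (eval b) y = 0 := by
  refine ⟨fun h r hr => ?_, fun h s hs => ?_⟩
  · have := mem_zeroLocus_iff_le_ker.1 h
      (show (finSuccEquiv 𝕜 n).symm r ∈ P.comap (finSuccEquiv 𝕜 n) by simpa using hr)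
    simpa [eval_cons_eq_eval₂] using this
  · exact (eval_cons_eq_eval₂ y b s).trans (h _ hs)

lemma mem_zeroLocus_of_cons_mem {P : Ideal (MvPolynomial (Fin n) 𝕜)[X]} {y : 𝕜} {b : Fin n → 𝕜}
    (h : (Fin.cons y b : Fin (n + 1) → 𝕜) ∈ zeroLocus 𝕜 (P.comap (finSuccEquiv 𝕜 n))) :
    b ∈ zeroLocus 𝕜 (P.comap Polynomial.C) := fun s hs => by
  simpa using cons_mem_zeroLocus_iff.1 h _ hs

lemma IsCentralPoint.cons_of_le_map_C {P : Ideal (MvPolynomial (Fin n) 𝕜)[X]} {b : Fin n → 𝕜}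
    (hP : P ≤ (P.comap Polynomial.C).map Polynomial.C)
    (hb : IsCentralPoint (P.comap Polynomial.C) b) (y : 𝕜) :
    IsCentralPoint (P.comap (finSuccEquiv 𝕜 n)) (Fin.cons y b) := by
  intro Q hQ
  obtain ⟨i, hi⟩ : ∃ i, (finSuccEquiv 𝕜 n Q).coeff i ∉ P.comap Polynomial.C := by
    by_contra! h
    exact hQ (Ideal.map_comap_le (K := P) (Ideal.mem_map_C_iff.2 h))
  rw [← closure_closure]
  refine map_mem_closure (f := fun c : Fin n → 𝕜 => (Fin.cons y c : Fin (n + 1) → 𝕜)) (by fun_prop)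
    (hb _ hi) fun c ⟨hcV, hci⟩ => ?_
  have hq : (finSuccEquiv 𝕜 n Q).map (eval c) ≠ 0 := fun h =>
    hci (by simpa using congrArg (Polynomial.coeff · i) h)
  have hdense : Dense {z | ((finSuccEquiv 𝕜 n Q).map (eval c)).IsRoot z}ᶜ :=
    (Polynomial.finite_setOfPred_isRoot hq).countable.dense_compl 𝕜
  refine map_mem_closure (f := fun z : 𝕜 => (Fin.cons z c : Fin (n + 1) → 𝕜)) (by fun_prop)
    (hdense y) fun z hz => ⟨cons_mem_zeroLocus_iff.2 fun r hr => ?_, ?_⟩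
  · have hr0 : r.map (eval c) = 0 := by
      ext j
      simpa using mem_zeroLocus_iff_le_ker.1 hcV (Ideal.mem_map_C_iff.1 (hP hr) j)
    rw [Polynomial.eval₂_eq_eval_map, hr0, Polynomial.eval_zero]
  · simpa [eval_cons_eq_eval₂, Polynomial.eval₂_eq_eval_map] using hz

lemma IsCentralPoint.cons_of_isMinimalEquation {P : Ideal (MvPolynomial (Fin n) 𝕜)[X]} [P.IsPrime]
    {G : (MvPolynomial (Fin n) 𝕜)[X]} (hG : IsMinimalEquation P G) {b : Fin n → 𝕜} {y : 𝕜}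
    (hb : IsCentralPoint (P.comap Polynomial.C) b) (hy : G.eval₂ (eval b) y = 0)
    (hy' : G.derivative.eval₂ (eval b) y ≠ 0) :
    IsCentralPoint (P.comap (finSuccEquiv 𝕜 n)) (Fin.cons y b) := by
  intro Q hQ
  obtain ⟨c, hc, S, hS⟩ := hG.exists_mul_sub_C_mem (Q := finSuccEquiv 𝕜 n Q) hQ
  have hclc : c * G.leadingCoeff ∉ P.comap Polynomial.C :=
    Ideal.IsPrime.mul_notMem inferInstance hc hG.leadingCoeff_notMem
  obtain ⟨ψ, hψ, rfl, hroot⟩ := exists_continuousAt_root hy hy'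
  have htendsto : Tendsto (fun x => (Fin.cons (ψ x) x : Fin (n + 1) → 𝕜)) (𝓝 b)
      (𝓝 (Fin.cons (ψ b) b)) :=
    ((by fun_prop : Continuous fun u : 𝕜 × (Fin n → 𝕜) => (Fin.cons u.1 u.2 : _ → 𝕜)).tendsto
      (ψ b, b)).comp (hψ.prodMk_nhds tendsto_id)
  rw [mem_closure_iff_frequently]
  refine htendsto.frequently (((mem_closure_iff_frequently.1 (hb _ hclc)).and_eventually hroot).mono
    fun x ⟨⟨hxV, hx⟩, hGx⟩ => ?_)
  rw [Set.mem_ofPred_eq, map_mul] at hx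
  have hvanish : ∀ r ∈ P, r.eval₂ (eval x) (ψ x) = 0 := fun r hr =>
    hG.eval₂_eq_zero (mem_zeroLocus_iff_le_ker.1 hxV) (right_ne_zero_of_mul hx) hGx hr
  refine ⟨cons_mem_zeroLocus_iff.2 hvanish, fun hQx => left_ne_zero_of_mul hx ?_⟩
  rw [eval_cons_eq_eval₂] at hQx
  simpa [hQx] using hvanish _ hS

theorem exists_forall_isCentralPoint (p : Ideal (MvPolynomial (Fin n) 𝕜)) [p.IsPrime] :
    ∃ δ ∉ p, ∀ a ∈ zeroLocus 𝕜 p, eval a δ ≠ 0 → IsCentralPoint p a := by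
  induction n with
  | zero =>
    refine ⟨1, p.one_notMem, fun a ha _ Q hQ => subset_closure ⟨ha, fun hQa => hQ ?_⟩⟩
    rw [eq_C_of_isEmpty Q, eval_C] at hQa
    rw [eq_C_of_isEmpty Q, hQa, C_0]
    exact p.zero_mem
  | succ n ih =>
    obtain ⟨P, hP, rfl⟩ : ∃ P : Ideal (MvPolynomial (Fin n) 𝕜)[X], P.IsPrime ∧
        P.comap (finSuccEquiv 𝕜 n) = p :=
      ⟨p.comap (finSuccEquiv 𝕜 n).symm, inferInstance, by ext; simp⟩
    obtain ⟨δ, hδ, hcentral⟩ := ih (P.comap Polynomial.C)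
    by_cases hle : P ≤ (P.comap Polynomial.C).map Polynomial.C
    · refine ⟨(finSuccEquiv 𝕜 n).symm (Polynomial.C δ), by simpa using hδ, fun a ha haδ => ?_⟩
      obtain ⟨y, b, rfl⟩ : ∃ y b, a = Fin.cons y b := ⟨_, _, (Fin.cons_self_tail a).symm⟩
      rw [eval_cons_eq_eval₂, AlgEquiv.apply_symm_apply, Polynomial.eval₂_C] at haδ
      exact (hcentral b (mem_zeroLocus_of_cons_mem ha) haδ).cons_of_le_map_C hle y
    · obtain ⟨G, hG⟩ := exists_isMinimalEquation hle
      refine ⟨(finSuccEquiv 𝕜 n).symm (Polynomial.C δ * G.derivative), ?_, fun a ha haδ => ?_⟩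
      · rw [Ideal.mem_comap, AlgEquiv.apply_symm_apply]
        exact hP.mul_notMem hδ hG.derivative_notMem
      · obtain ⟨y, b, rfl⟩ : ∃ y b, a = Fin.cons y b := ⟨_, _, (Fin.cons_self_tail a).symm⟩
        rw [eval_cons_eq_eval₂, AlgEquiv.apply_symm_apply, Polynomial.eval₂_mul,
          Polynomial.eval₂_C] at haδ
        have hb := hcentral b (mem_zeroLocus_of_cons_mem ha) (left_ne_zero_of_mul haδ)
        exact hb.cons_of_isMinimalEquation hG (cons_mem_zeroLocus_iff.1 ha G hG.mem)
          (right_ne_zero_of_mul haδ)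

end CentralPoint

section RationalOnVariety

variable {σ K : Type*} [Field K] [TopologicalSpace K] [IsTopologicalRing K] [T2Space K]
  [(𝓝[≠] (0 : K)).NeBot]

lemma coeff_mul_apply_zero_eq_coeff {φ : K → K} (hφ : Continuous φ) {A B : K[X]}
    (h : ∀ t, A.eval t * φ t = B.eval t) {j : ℕ} (hA : ∀ i < j, A.coeff i = 0) :
    A.coeff j * φ 0 = B.coeff j := by
  induction j generalizing A B with
  | zero => simpa [Polynomial.coeff_zero_eq_eval_zero] using h 0
  | succ j ih =>
    have hA0 : A.coeff 0 = 0 := hA 0 j.succ_pos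
    have hB0 : B.coeff 0 = 0 := by
      rw [Polynomial.coeff_zero_eq_eval_zero] at hA0 ⊢
      rw [← h 0, hA0, zero_mul]
    obtain ⟨A', rfl⟩ := Polynomial.X_dvd_iff.2 hA0
    obtain ⟨B', rfl⟩ := Polynomial.X_dvd_iff.2 hB0
    have hdiv : (fun t => A'.eval t * φ t) = fun t => B'.eval t := by
      refine (A'.continuous.mul hφ).ext_on (dense_compl_singleton 0) B'.continuous fun t ht => ?_
      exact mul_left_cancel₀ ht (by simpa [mul_assoc] using h t)
    simpa only [Polynomial.coeff_X_mul] using ih (congrFun hdiv) fun i hi => by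
      simpa only [Polynomial.coeff_X_mul] using hA (i + 1) (Nat.succ_lt_succ hi)

/-- The expansion of `q (x + t v)` as a polynomial in `t`, with coefficients polynomial in `x`. -/
noncomputable def lineExpansion {R : Type*} [CommSemiring R] (v : σ → R) (q : MvPolynomial σ R) :
    (MvPolynomial σ R)[X] :=
  aeval (fun i => Polynomial.C (X i) + Polynomial.X * Polynomial.C (C (v i))) q

lemma eval_map_lineExpansion {R : Type*} [CommSemiring R] (v : σ → R) (q : MvPolynomial σ R)
    (x : σ → R) (t : R) :
    ((lineExpansion v q).map (eval x)).eval t = eval (x + t • v) q := by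
  unfold lineExpansion
  induction q using MvPolynomial.induction_on with
  | C a => simp [Polynomial.algebraMap_apply]
  | add p q hp hq => simp only [map_add, Polynomial.map_add, Polynomial.eval_add, hp, hq]
  | mul_X p i hp =>
    rw [map_mul, Polynomial.map_mul, Polynomial.eval_mul, hp, map_mul]
    simp [mul_comm (v i)]

lemma exists_eval_mul_eq_on_zeroLocus {f : (σ → K) → K} (hf : Continuous f)
    {p q : MvPolynomial σ K} (hq : ∃ b, eval b q ≠ 0) (h : ∀ x, eval x q * f x = eval x p)
    {I : Ideal (MvPolynomial σ K)} (hI : (zeroLocus K I).Nonempty) :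
    ∃ P Q : MvPolynomial σ K, Q ∉ I ∧ ∀ x ∈ zeroLocus K I, eval x Q * f x = eval x P := by
  obtain ⟨b, hb⟩ := hq
  obtain ⟨a, ha⟩ := hI
  have hcoeff : ∃ j, (lineExpansion (b - a) q).coeff j ∉ I := by
    by_contra! hcon
    have hzero : (lineExpansion (b - a) q).map (eval a) = 0 := by
      ext j
      simpa using mem_zeroLocus_iff_le_ker.1 ha (hcon j)
    exact hb (by simpa [hzero] using (eval_map_lineExpansion (b - a) q a 1).symm)
  classical
  refine ⟨(lineExpansion (b - a) p).coeff (Nat.find hcoeff),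
    (lineExpansion (b - a) q).coeff (Nat.find hcoeff), Nat.find_spec hcoeff, fun x hx => ?_⟩
  have hline : Continuous fun t : K => f (x + t • (b - a)) := hf.comp (by fun_prop)
  simpa using coeff_mul_apply_zero_eq_coeff hline (A := (lineExpansion (b - a) q).map (eval x))
    (B := (lineExpansion (b - a) p).map (eval x))
    (fun t => by simpa only [eval_map_lineExpansion] using h _)
    (fun i hi => by
      rw [Polynomial.coeff_map]
      exact mem_zeroLocus_iff_le_ker.1 hx (not_not.1 (Nat.find_min hcoeff hi)))

end RationalOnVariety

section Nullstellensatz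

variable {K : Type*} [Field K] [LinearOrder K] [IsStrictOrderedRing K]

lemma exists_mem_forall_mem_zeroLocus_of_eval_eq_zero {σ : Type*} [Finite σ]
    (I : Ideal (MvPolynomial σ K)) :
    ∃ s ∈ I, ∀ x, eval x s = 0 → x ∈ zeroLocus K I := by
  obtain ⟨T, rfl⟩ := IsNoetherian.noetherian I
  refine ⟨∑ t ∈ T, t * t, ?_, fun x hx => mem_zeroLocus_iff_le_ker.2 (Ideal.span_le.2 ?_)⟩
  · exact Ideal.sum_mem _ fun t ht => Ideal.mul_mem_left _ _ (Ideal.subset_span ht)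
  · intro t ht
    rw [map_sum, Finset.sum_eq_zero_iff_of_nonneg fun t _ => by
      rw [map_mul]; exact mul_self_nonneg _] at hx
    simpa using hx t ht

lemma mem_of_mem_of_forall_eq_zero {E : Type*} {A : Subring (E → K)}
    (hinv : ∀ f ∈ A, (∀ x, f x ≠ 0) → f⁻¹ ∈ A) {m : Ideal A} (hm : m.IsMaximal) {s g : A}
    (hs : s ∈ m) (h : ∀ x, (s : E → K) x = 0 → (g : E → K) x = 0) : g ∈ m := by
  by_contra hg
  obtain ⟨r, u, hu, hru⟩ := hm.exists_inv hg
  have hne : ∀ x, (s * s + u * u : E → K) x ≠ 0 := by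
    intro x hx
    obtain ⟨hsx, hux⟩ := mul_self_add_mul_self_eq_zero.1 hx
    have hone : (r : E → K) x * (g : E → K) x + (u : E → K) x = 1 :=
      congrFun (congrArg Subtype.val hru) x
    simp [h x hsx, hux] at hone
  have hunit : IsUnit (s * s + u * u) :=
    IsUnit.of_mul_eq_one ⟨_, hinv _ (s * s + u * u).2 hne⟩
      (Subtype.ext (funext fun x => mul_inv_cancel₀ (hne x)))
  exact hm.ne_top (m.eq_top_of_isUnit_mem (m.add_mem (m.mul_mem_left s hs) (m.mul_mem_left u hu))
    hunit)

end Nullstellensatz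

section FunctionRing

variable {σ K : Type*} [Field K] [LinearOrder K] [IsStrictOrderedRing K]

/-- The inclusion of the polynomial functions into a ring of functions containing them; pulling
an ideal back along it is the encoding of intersecting that ideal with the polynomial ring. -/
noncomputable def polynomialInclusion {R : Type*} [CommRing R] (A : Subring ((σ → R) → R))
    (hpoly : ∀ p, (fun x => eval x p) ∈ A) : MvPolynomial σ R →+* A :=
  (RingHom.pi fun x => eval x).codRestrict A hpoly

variable {A : Subring ((σ → K) → K)} (hpoly : ∀ p, (fun x => eval x p) ∈ A) {m : Ideal A}

lemma mem_of_forall_mem_zeroLocus [Finite σ] (hm : m.IsMaximal)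
    (hinv : ∀ f ∈ A, (∀ x, f x ≠ 0) → f⁻¹ ∈ A) {g : A}
    (hg : ∀ x ∈ zeroLocus K (m.comap (polynomialInclusion A hpoly)), (g : (σ → K) → K) x = 0) :
    g ∈ m := by
  obtain ⟨s, hs, hzero⟩ :=
    exists_mem_forall_mem_zeroLocus_of_eval_eq_zero (m.comap (polynomialInclusion A hpoly))
  exact mem_of_mem_of_forall_eq_zero hinv hm hs fun x hx => hg x (hzero x hx)

lemma IsCentralPoint.eq_zero_of_mem [TopologicalSpace K] [OrderTopology K] [Finite σ]
    (hm : m.IsMaximal) (hinv : ∀ f ∈ A, (∀ x, f x ≠ 0) → f⁻¹ ∈ A) {a : σ → K}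
    (ha : a ∈ zeroLocus K (m.comap (polynomialInclusion A hpoly)))
    (hcentral : IsCentralPoint (m.comap (polynomialInclusion A hpoly)) a)
    {f : A} (hfm : f ∈ m) (hf : Continuous (f : (σ → K) → K)) {p q : MvPolynomial σ K}
    (hq : q ≠ 0) (h : ∀ x, eval x q * (f : (σ → K) → K) x = eval x p) :
    (f : (σ → K) → K) a = 0 := by
  obtain ⟨b, hb⟩ : ∃ b, eval b q ≠ 0 := by
    by_contra! hzero
    exact hq (MvPolynomial.funext fun x => by rw [hzero, map_zero])
  obtain ⟨P, Q, hQ, hPQ⟩ := exists_eval_mul_eq_on_zeroLocus hf ⟨b, hb⟩ h ⟨a, ha⟩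
  have hPm : polynomialInclusion A hpoly P ∈ m := by
    have hdiff : polynomialInclusion A hpoly Q * f - polynomialInclusion A hpoly P ∈ m :=
      mem_of_forall_mem_zeroLocus hpoly hm hinv fun x hx => sub_eq_zero.2 (hPQ x hx)
    exact (m.sub_mem_iff_right (m.mul_mem_left _ hfm)).1 hdiff
  refine hcentral.eq_zero_of_eval_mul_eq_zero hf hQ fun x hx => ?_
  exact (hPQ x hx).trans (mem_zeroLocus_iff_le_ker.1 hx hPm)

lemma exists_isCentralPoint_comap {n : ℕ} {A : Subring ((Fin n → ℝ) → ℝ)}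
    (hpoly : ∀ p, (fun x => eval x p) ∈ A) {m : Ideal A} (hm : m.IsMaximal)
    (hinv : ∀ f ∈ A, (∀ x, f x ≠ 0) → f⁻¹ ∈ A) :
    ∃ a ∈ zeroLocus ℝ (m.comap (polynomialInclusion A hpoly)),
      IsCentralPoint (m.comap (polynomialInclusion A hpoly)) a := by
  have hprime := hm.isPrime
  obtain ⟨δ, hδ, hcentral⟩ :=
    exists_forall_isCentralPoint (m.comap (polynomialInclusion A hpoly))
  by_contra! hcon
  exact hδ (mem_of_forall_mem_zeroLocus hpoly hm hinv fun x hx =>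
    not_not.1 fun hδx => hcon x hx (hcentral x hx hδx))

theorem maximal_ideal_is_point_general {n : ℕ} (A : Subring ((Fin n → ℝ) → ℝ))
    (hcont : ∀ f ∈ A, Continuous f)
    (hrat : ∀ f ∈ A, ∃ p q : MvPolynomial (Fin n) ℝ, q ≠ 0 ∧ ∀ x, eval x q * f x = eval x p)
    (hpoly : ∀ p, (fun x => eval x p) ∈ A) (hinv : ∀ f ∈ A, (∀ x, f x ≠ 0) → f⁻¹ ∈ A)
    (m : Ideal A) (hm : m.IsMaximal) :
    ∃! x, ∀ f : A, f ∈ m ↔ (f : (Fin n → ℝ) → ℝ) x = 0 := by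
  obtain ⟨a, ha, hcentral⟩ := exists_isCentralPoint_comap hpoly hm hinv
  have hle : m ≤ RingHom.ker ((Pi.evalRingHom _ a).comp A.subtype) := by
    intro f hf
    obtain ⟨p, q, hq, hpq⟩ := hrat f f.2
    exact hcentral.eq_zero_of_mem hpoly hm hinv ha hf (hcont f f.2) hq hpq
  have hker := hm.eq_of_le (RingHom.ker_ne_top _) hle
  have hmem : ∀ f : A, f ∈ m ↔ (f : (Fin n → ℝ) → ℝ) a = 0 := SetLike.ext_iff.1 hker
  refine ⟨a, hmem, fun y hy => funext fun i => ?_⟩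
  have hcoord := (hy ⟨_, hpoly (X i - C (a i))⟩).1 ((hmem _).2 (by simp))
  simpa [sub_eq_zero] using hcoord

end FunctionRing

section Regulous

variable {n k : ℕ}

lemma eval_mem_regulousRing (p : MvPolynomial (Fin n) ℝ) :
    (fun x => eval x p) ∈ regulousRing n k :=
  ⟨contDiff_eval p, p, 1, one_ne_zero, fun x => by rw [map_one, one_mul]⟩

lemma inv_mem_regulousRing {f : (Fin n → ℝ) → ℝ} (hf : f ∈ regulousRing n k)
    (hne : ∀ x, f x ≠ 0) : f⁻¹ ∈ regulousRing n k := by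
  obtain ⟨hsmooth, p, q, hq, h⟩ := hf
  refine ⟨hsmooth.inv hne, q, p, ?_, fun x => ?_⟩
  · rintro rfl
    refine hq (MvPolynomial.funext fun x => ?_)
    simpa [hne x] using h x
  · rw [← h x, Pi.inv_apply, mul_inv_cancel_right₀ (hne x)]

end Regulous

/-- **Regulous functions, Proposition `maximal`**: every maximal ideal of `R^k(ℝⁿ)` is the
ideal of functions vanishing at a unique point `x ∈ ℝⁿ`. -/
theorem maximal_ideal_is_point (n k : ℕ) (m : Ideal (regulousRing n k))
    (hm : m.IsMaximal) :
    ∃! x : Fin n → ℝ,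
      ∀ f : regulousRing n k, f ∈ m ↔ (f : (Fin n → ℝ) → ℝ) x = 0 :=
  maximal_ideal_is_point_general (regulousRing n k) (fun _ hf => hf.1.continuous)
    (fun _ hf => hf.2) eval_mem_regulousRing (fun _ => inv_mem_regulousRing) m hm
end

section
/- Let n, k be natural numbers. The Krull dimension of the ring R^k(ℝⁿ) of k-regulous functions on ℝⁿ equals n. -/
open MvPolynomial

/-! The Krull dimension of an algebra over a field is at most its transcendence degree, because the
transcendence degree of the quotient drops along a strict inclusion of primes. For `R^k(ℝⁿ)` this
degree is `n`, since `q f = p` makes every regulous function algebraic over the polynomials.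

Conversely, regulous functions restrict to the hyperplane `x₀ = 0`: in `q f = p`, if `x₀` divides
`q`, then `p` vanishes on `x₀ = 0`, so `x₀` divides `p` as well and can be cancelled, by continuity
of `f`. The denominator may thus be taken not identically zero on the hyperplane. The restriction
`R^k(ℝⁿ⁺¹) → R^k(ℝⁿ)` is surjective and kills the nonzerodivisor `x₀`, so the dimension increases
by at least one with `n`. -/

section TranscendenceDegree

open scoped nonZeroDivisors

universe u v w

section Surjective

variable {R : Type u} {B C : Type v} [CommRing R] [CommRing B] [CommRing C] [Algebra R B]
  [Algebra R C]

theorem transcendental_adjoin_range_of_map_eq_zero {ι : Type w} (φ : B →ₐ[R] C) {x : ι → B}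
    (hx : AlgebraicIndependent R (φ ∘ x)) {b : B} (hb : b ∈ B⁰) (hφb : φ b = 0) :
    Transcendental (Algebra.adjoin R (Set.range x)) b := by
  intro hb_alg
  obtain ⟨⟨r, hr⟩, hr_ne, hb_dvd⟩ := hb_alg.exists_nonzero_dvd hb
  have hφr : φ r = 0 := zero_dvd_iff.1 (hφb ▸ map_dvd φ hb_dvd)
  rw [Algebra.adjoin_range_eq_range_aeval] at hr
  obtain ⟨P, rfl⟩ := hr
  have hP : P = 0 := by
    refine algebraicIndependent_iff.1 hx P ?_
    rwa [Function.comp_def, ← comp_aeval_apply]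
  exact hr_ne (Subtype.ext (by simp [hP]))

theorem trdeg_add_one_le_of_surjective [Nontrivial R] [FaithfulSMul R C] (φ : B →ₐ[R] C)
    (hφ : Function.Surjective φ) {b : B} (hb : b ∈ B⁰) (hφb : φ b = 0) :
    Algebra.trdeg R C + 1 ≤ Algebra.trdeg R B := by
  obtain ⟨lift, hlift⟩ := hφ.hasRightInverse
  have : Nonempty {s : Set C // AlgebraicIndependent R ((↑) : s → C)} :=
    ⟨∅, (algebraicIndependent_empty_iff R C).2 (FaithfulSMul.algebraMap_injective R C)⟩
  rw [Algebra.trdeg, Cardinal.ciSup_add _ Cardinal.bddAbove_of_small]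
  refine ciSup_le' fun ⟨s, hs⟩ ↦ ?_
  have hφ_lift : (φ ∘ fun c : s ↦ lift c) = (↑) := _root_.funext fun c ↦ hlift c
  have hs_lift : AlgebraicIndependent R (φ ∘ fun c : s ↦ lift c) := by rwa [hφ_lift]
  rw [← Cardinal.mk_option]
  exact (AlgebraicIndependent.option_iff.2 ⟨hs_lift.of_comp φ,
    transcendental_adjoin_range_of_map_eq_zero φ hs_lift hb hφb⟩).cardinalMk_le_trdeg

end Surjective

variable (F : Type u) {A : Type v} [Field F] [CommRing A] [Algebra F A]

theorem trdeg_quotient_add_one_le_of_lt {p q : Ideal A} [p.IsPrime] (hq : q ≠ ⊤) (hpq : p < q) :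
    Algebra.trdeg F (A ⧸ q) + 1 ≤ Algebra.trdeg F (A ⧸ p) := by
  obtain ⟨hle, a, haq, hap⟩ := SetLike.lt_iff_le_and_exists.1 hpq
  have : Nontrivial (A ⧸ q) := Ideal.Quotient.nontrivial_iff.2 hq
  refine trdeg_add_one_le_of_surjective (Ideal.Quotient.factorₐ F hle)
    (Ideal.Quotient.factor_surjective hle) (b := Ideal.Quotient.mk p a)
    (mem_nonZeroDivisors_of_ne_zero ?_) ?_
  · rwa [Ne, Ideal.Quotient.eq_zero_iff_mem]
  · simpa [Ideal.Quotient.eq_zero_iff_mem] using haq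

theorem trdeg_quotient_last_add_length_le (l : LTSeries (PrimeSpectrum A)) :
    Algebra.trdeg F (A ⧸ l.last.asIdeal) + l.length ≤ Algebra.trdeg F (A ⧸ l.head.asIdeal) := by
  induction l using RelSeries.inductionOn' with
  | singleton p => exact (add_zero _).le
  | snoc l p hp ih =>
    rw [RelSeries.last_snoc, RelSeries.head_snoc]
    calc Algebra.trdeg F (A ⧸ p.asIdeal) + (l.length + 1 : ℕ)
      _ = Algebra.trdeg F (A ⧸ p.asIdeal) + 1 + l.length := by push_cast; ring
      _ ≤ Algebra.trdeg F (A ⧸ l.last.asIdeal) + l.length := by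
        gcongr
        exact trdeg_quotient_add_one_le_of_lt F p.2.ne_top hp
      _ ≤ Algebra.trdeg F (A ⧸ l.head.asIdeal) := ih

theorem ringKrullDim_le_trdeg :
    ringKrullDim A ≤ (Cardinal.toENat (Algebra.trdeg F A) : WithBot ℕ∞) := by
  refine iSup_le fun l ↦ ?_
  have hl : (l.length : Cardinal) ≤ Algebra.trdeg F A :=
    calc (l.length : Cardinal)
      _ ≤ Algebra.trdeg F (A ⧸ l.last.asIdeal) + l.length := le_add_self
      _ ≤ Algebra.trdeg F (A ⧸ l.head.asIdeal) := trdeg_quotient_last_add_length_le F l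
      _ ≤ Algebra.trdeg F A := trdeg_le_of_surjective (Ideal.Quotient.mkₐ F _)
        (Ideal.Quotient.mkₐ_surjective F _)
  exact_mod_cast Cardinal.natCast_le_toENat.2 hl

end TranscendenceDegree

section ZeroSet

open scoped Topology

theorem dense_setOf_eval_ne_zero {σ 𝕜 : Type*} [CommRing 𝕜] [IsDomain 𝕜] [TopologicalSpace 𝕜]
    [T1Space 𝕜] [∀ a : 𝕜, (𝓝[≠] a).NeBot] {q : MvPolynomial σ 𝕜} (hq : q ≠ 0) :
    Dense {x : σ → 𝕜 | eval x q ≠ 0} := by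
  refine fun x ↦ mem_closure_iff_nhds.2 fun U hU ↦ ?_
  rw [nhds_pi, Filter.mem_pi] at hU
  obtain ⟨I, -, t, ht, htU⟩ := hU
  by_contra hempty
  refine hq (funext_set t (fun i ↦ infinite_of_mem_nhds (x i) (ht i)) fun y hy ↦ ?_)
  by_contra hne
  exact hempty ⟨y, htU fun i _ ↦ hy i trivial, by simpa using hne⟩

theorem eq_of_eval_mul_eq {σ 𝕜 : Type*} [CommRing 𝕜] [IsDomain 𝕜] [TopologicalSpace 𝕜] [T2Space 𝕜]
    [∀ a : 𝕜, (𝓝[≠] a).NeBot] {q : MvPolynomial σ 𝕜} (hq : q ≠ 0) {f g : (σ → 𝕜) → 𝕜}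
    (hf : Continuous f) (hg : Continuous g) (h : ∀ x, eval x q * f x = eval x q * g x) : f = g :=
  hf.ext_on (dense_setOf_eval_ne_zero hq) hg fun x hx ↦ mul_left_cancel₀ hx (h x)

end ZeroSet

section Hyperplane

variable {R : Type*} [CommRing R] {n : ℕ}

theorem eval_cons_zero (p : MvPolynomial (Fin (n + 1)) R) (x : Fin n → R) :
    eval (Fin.cons 0 x : Fin (n + 1) → R) p = eval x ((finSuccEquiv R n p).coeff 0) := by
  rw [eval_eq_eval_mv_eval', ← Polynomial.coeff_zero_eq_eval_zero, Polynomial.coeff_map]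

theorem X_zero_dvd_iff_coeff_finSuccEquiv {p : MvPolynomial (Fin (n + 1)) R} :
    X 0 ∣ p ↔ (finSuccEquiv R n p).coeff 0 = 0 := by
  rw [← Polynomial.X_dvd_iff, ← finSuccEquiv_X_zero, map_dvd_iff]

theorem X_zero_dvd_iff_eval_cons_zero [IsDomain R] [Infinite R]
    {p : MvPolynomial (Fin (n + 1)) R} :
    X 0 ∣ p ↔ ∀ x : Fin n → R, eval (Fin.cons 0 x : Fin (n + 1) → R) p = 0 := by
  simp only [X_zero_dvd_iff_coeff_finSuccEquiv, eval_cons_zero, MvPolynomial.funext_iff, map_zero]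

end Hyperplane

section Denominator

variable {𝕜 : Type*} [NontriviallyNormedField 𝕜] {n : ℕ} {f : (Fin (n + 1) → 𝕜) → 𝕜}
  {q : MvPolynomial (Fin (n + 1)) 𝕜}

theorem exists_eval_mul_eq_of_X_zero_mul (hf : Continuous f)
    (h : ∃ p, ∀ x, eval x (X 0 * q) * f x = eval x p) :
    ∃ p, ∀ x, eval x q * f x = eval x p := by
  obtain ⟨p, hp⟩ := h
  obtain ⟨p', rfl⟩ : X 0 ∣ p := X_zero_dvd_iff_eval_cons_zero.2 fun x ↦ by simp [← hp]
  refine ⟨p', congrFun (eq_of_eval_mul_eq (X_ne_zero 0) ((continuous_eval q).mul hf)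
    (continuous_eval p') fun x ↦ ?_)⟩
  simpa only [eval_mul, mul_assoc] using hp x

theorem exists_eval_mul_eq_of_X_zero_pow_mul (hf : Continuous f) (m : ℕ)
    (h : ∃ p, ∀ x, eval x (X 0 ^ m * q) * f x = eval x p) :
    ∃ p, ∀ x, eval x q * f x = eval x p := by
  induction m with
  | zero => simpa only [pow_zero, one_mul] using h
  | succ m ih =>
    refine ih (exists_eval_mul_eq_of_X_zero_mul hf ?_)
    simpa only [pow_succ', mul_assoc] using h

theorem exists_not_X_zero_dvd_and_eval_mul_eq (hf : Continuous f) (hq : q ≠ 0)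
    (h : ∃ p, ∀ x, eval x q * f x = eval x p) :
    ∃ p q' : MvPolynomial (Fin (n + 1)) 𝕜, ¬X 0 ∣ q' ∧ ∀ x, eval x q' * f x = eval x p := by
  obtain ⟨q', hqq', hq'⟩ :=
    (FiniteMultiplicity.of_prime_left (X_prime (i := 0)) hq).exists_eq_pow_mul_and_not_dvd
  obtain ⟨p, hp⟩ := exists_eval_mul_eq_of_X_zero_pow_mul hf _ (hqq' ▸ h)
  exact ⟨p, q', hq', hp⟩

end Denominator

namespace IsRegulous

variable {m n k : ℕ}

theorem of_eval (k : ℕ) (p : MvPolynomial (Fin n) ℝ) : IsRegulous n k fun x ↦ eval x p :=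
  ⟨(AnalyticOnNhd.eval_mvPolynomial p).contDiff, p, 1, one_ne_zero, fun x ↦ by simp⟩

theorem comp_cons_zero {f : (Fin (n + 1) → ℝ) → ℝ} (hf : IsRegulous (n + 1) k f) :
    IsRegulous n k fun x ↦ f (Fin.cons 0 x) := by
  obtain ⟨hf_smooth, p₀, q₀, hq₀, hpq₀⟩ := hf
  obtain ⟨p, q, hq, hpq⟩ :=
    exists_not_X_zero_dvd_and_eval_mul_eq hf_smooth.continuous hq₀ ⟨p₀, hpq₀⟩
  refine ⟨hf_smooth.comp (contDiff_pi.2 (Fin.cases contDiff_const fun i ↦ contDiff_apply ℝ ℝ i)),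
    (finSuccEquiv ℝ n p).coeff 0, (finSuccEquiv ℝ n q).coeff 0,
    X_zero_dvd_iff_coeff_finSuccEquiv.not.1 hq, fun x ↦ ?_⟩
  rw [← eval_cons_zero, ← eval_cons_zero, hpq]

theorem comp_reindex {f : (Fin m → ℝ) → ℝ} (hf : IsRegulous m k f) {e : Fin m → Fin n}
    (he : Function.Injective e) : IsRegulous n k fun x ↦ f (x ∘ e) := by
  obtain ⟨hf_smooth, p, q, hq, hpq⟩ := hf
  refine ⟨hf_smooth.comp (contDiff_pi.2 fun i ↦ contDiff_apply ℝ ℝ (e i)), rename e p, rename e q,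
    (map_ne_zero_iff _ (rename_injective e he)).2 hq, fun x ↦ ?_⟩
  rw [eval_rename, eval_rename, hpq]

theorem eq_zero_of_mul_eq_zero {f g : (Fin n → ℝ) → ℝ} (hf : IsRegulous n k f)
    (hg : IsRegulous n k g) (hfg : f * g = 0) : f = 0 ∨ g = 0 := by
  obtain ⟨hf_smooth, p₁, q₁, hq₁, h₁⟩ := hf
  obtain ⟨hg_smooth, p₂, q₂, hq₂, h₂⟩ := hg
  have hp : p₁ * p₂ = 0 := MvPolynomial.funext fun x ↦ by
    rw [eval_mul, ← h₁, ← h₂, mul_mul_mul_comm, ← Pi.mul_apply, hfg, Pi.zero_apply, mul_zero,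
      map_zero]
  refine (mul_eq_zero.1 hp).imp (fun hp₁ ↦ ?_) fun hp₂ ↦ ?_
  · exact eq_of_eval_mul_eq hq₁ hf_smooth.continuous continuous_const fun x ↦ by simp [h₁, hp₁]
  · exact eq_of_eval_mul_eq hq₂ hg_smooth.continuous continuous_const fun x ↦ by simp [h₂, hp₂]

end IsRegulous

namespace regulousRing

variable (n k : ℕ)

instance : IsDomain (regulousRing n k) :=
  have : NoZeroDivisors (regulousRing n k) :=
    ⟨fun {f g} hfg ↦ (f.2.eq_zero_of_mul_eq_zero g.2 (congrArg Subtype.val hfg)).imp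
      Subtype.ext Subtype.ext⟩
  NoZeroDivisors.to_isDomain _

/-- The ring homomorphism from polynomials to regulous functions sending a polynomial to its
polynomial function. -/
noncomputable def ofPolynomial : MvPolynomial (Fin n) ℝ →+* regulousRing n k :=
  (RingHom.pi fun x ↦ eval x).codRestrict _ (IsRegulous.of_eval k)

theorem ofPolynomial_injective : Function.Injective (ofPolynomial n k) := fun _ _ h ↦
  MvPolynomial.funext fun x ↦ congrFun (congrArg Subtype.val h) x

noncomputable instance : Algebra (MvPolynomial (Fin n) ℝ) (regulousRing n k) :=
  (ofPolynomial n k).toAlgebra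

noncomputable instance : Algebra ℝ (regulousRing n k) :=
  Algebra.compHom _ (C : ℝ →+* MvPolynomial (Fin n) ℝ)

instance : IsScalarTower ℝ (MvPolynomial (Fin n) ℝ) (regulousRing n k) :=
  .of_algebraMap_eq fun _ ↦ rfl

instance : FaithfulSMul (MvPolynomial (Fin n) ℝ) (regulousRing n k) :=
  (faithfulSMul_iff_algebraMap_injective _ _).2 (ofPolynomial_injective n k)

instance : Algebra.IsAlgebraic (MvPolynomial (Fin n) ℝ) (regulousRing n k) where
  isAlgebraic := by
    rintro ⟨f, hf, p, q, hq, hpq⟩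
    refine .of_smul (mem_nonZeroDivisors_of_ne_zero hq) ?_
    have hqf : q • (⟨f, hf, p, q, hq, hpq⟩ : regulousRing n k) = ofPolynomial n k p :=
      Subtype.ext (_root_.funext hpq)
    exact hqf ▸ isAlgebraic_algebraMap p

theorem trdeg_eq : Algebra.trdeg ℝ (regulousRing n k) = n := by
  rw [← trdeg_add_eq ℝ (MvPolynomial (Fin n) ℝ),
    MvPolynomial.trdeg_of_isDomain, trdeg_eq_zero, add_zero, Cardinal.mk_fin, Cardinal.lift_natCast]

/-- Restriction of regulous functions to the hyperplane `x₀ = 0`. -/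
def restrictHyperplane : regulousRing (n + 1) k →+* regulousRing n k where
  toFun f := ⟨_, f.2.comp_cons_zero⟩
  map_one' := rfl
  map_zero' := rfl
  map_mul' _ _ := rfl
  map_add' _ _ := rfl

theorem restrictHyperplane_surjective : Function.Surjective (restrictHyperplane n k) := fun f ↦
  ⟨⟨_, f.2.comp_reindex (Fin.succ_injective n)⟩, rfl⟩

theorem restrictHyperplane_ofPolynomial_X_zero :
    restrictHyperplane n k (ofPolynomial (n + 1) k (X 0)) = 0 :=
  Subtype.ext (_root_.funext fun _ ↦ eval_X 0)

theorem ringKrullDim_add_one_le :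
    ringKrullDim (regulousRing n k) + 1 ≤ ringKrullDim (regulousRing (n + 1) k) :=
  ringKrullDim_succ_le_of_surjective _ (restrictHyperplane_surjective n k)
    (mem_nonZeroDivisors_of_ne_zero
      ((map_ne_zero_iff _ (ofPolynomial_injective (n + 1) k)).2 (X_ne_zero 0)))
    (restrictHyperplane_ofPolynomial_X_zero n k)

theorem le_ringKrullDim : (n : WithBot ℕ∞) ≤ ringKrullDim (regulousRing n k) := by
  induction n with
  | zero => exact ringKrullDim_nonneg_of_nontrivial
  | succ n ih =>
    calc ((n + 1 : ℕ) : WithBot ℕ∞)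
      _ = n + 1 := by push_cast; rfl
      _ ≤ ringKrullDim (regulousRing n k) + 1 := by gcongr
      _ ≤ ringKrullDim (regulousRing (n + 1) k) := ringKrullDim_add_one_le n k

end regulousRing

/-- **Regulous functions, Proposition `dimensionregulue`**: the Krull dimension of the
ring `R^k(ℝⁿ)` of `k`-regulous functions on `ℝⁿ` equals `n`. -/
theorem krullDim_regulousRing (n k : ℕ) :
    ringKrullDim (regulousRing n k) = n := by
  refine le_antisymm ?_ (regulousRing.le_ringKrullDim n k)
  calc ringKrullDim (regulousRing n k)
    _ ≤ (Cardinal.toENat (Algebra.trdeg ℝ (regulousRing n k)) : WithBot ℕ∞) :=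
      ringKrullDim_le_trdeg ℝ
    _ = n := by rw [regulousRing.trdeg_eq, Cardinal.toENat_nat]; rfl
end
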